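/- Let occ(σ) be the number of occurrences in σ of the mesh pattern Nr. 55, where an occurrence is a pair of indices i < j with a = σ_i < σ_j = b such that: every element before position i has value greater than b; every element strictly between positions i and j has value less than a; and every element after position j has value greater than b. Let E(t,u) = Σ_{n≥0} t^n Σ_{σ∈K_n} u^{occ(σ)}. Then (1 − t(1−u) − t^2 + t(1−u)·A(t))·E(t,u) = (1+t)·((1−ut)·A(t) − t(1−u)) as formal power series in t over ℚ[u]. -/

import Mathlib

/-- A permutation of `{0, …, n-1}` is a *king permutation* if consecutive entries
differ by more than 1 in absolute value. -/
def IsKing {n : ℕ} (σ : Equiv.Perm (Fin n)) : Prop :=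
  ∀ i : Fin n, ∀ h : (i : ℕ) + 1 < n,
    1 < |((σ ⟨(i : ℕ) + 1, h⟩ : ℕ) : ℤ) - ((σ i : ℕ) : ℤ)|

/-- `kingCount n = A_n`, the number of king permutations of length `n`. -/
noncomputable def kingCount (n : ℕ) : ℕ :=
  Nat.card {σ : Equiv.Perm (Fin n) // IsKing σ}

/-- `A(t)` regarded as a power series over `ℚ[u]` (constant-polynomial coefficients). -/
noncomputable def kingAu : PowerSeries (Polynomial ℚ) :=
  PowerSeries.mk fun n => (kingCount n : Polynomial ℚ)

/-- `u` viewed as a constant power series over `ℚ[u]`. -/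
noncomputable def U : PowerSeries (Polynomial ℚ) :=
  PowerSeries.C (R := Polynomial ℚ) Polynomial.X

/-- `t`, the power series variable. -/
noncomputable def T : PowerSeries (Polynomial ℚ) :=
  PowerSeries.X

/-- An occurrence of the mesh pattern Nr. 55 in `σ`. -/
def OccP {n : ℕ} (σ : Equiv.Perm (Fin n)) (i j : Fin n) : Prop :=
  i < j ∧ σ i < σ j ∧
    (∀ k : Fin n, k < i → σ j < σ k) ∧
    (∀ k : Fin n, i < k → k < j → σ k < σ i) ∧
    (∀ k : Fin n, j < k → σ j < σ k)

/-- The number of occurrences of the mesh pattern Nr. 55 in `σ`. -/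
noncomputable def occP {n : ℕ} (σ : Equiv.Perm (Fin n)) : ℕ :=
  Nat.card {p : Fin n × Fin n // OccP σ p.1 p.2}

-- `E(t,u) = Σ_{n≥0} t^n Σ_{σ∈K_n} u^{occ(σ)}`, a power series in `t` over `ℚ[u]`.
open Classical in
noncomputable def Etu : PowerSeries (Polynomial ℚ) :=
  PowerSeries.mk fun n =>
    ∑ σ : Equiv.Perm (Fin n),
      if IsKing σ then (Polynomial.X : Polynomial ℚ) ^ occP σ else 0

/-!
Values and positions are counted from `0`. The letters of an occurrence are consecutive, `m` and
`m + 1`, and it cuts the one-line word into `P m t (m + 1) S`, where `t` arranges the letters below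
`m` while `P` and `S` share the letters above `m + 1`. For a king permutation the conditions on `t`
(nonempty, not starting with `m - 1`) and on `(P, S)` are independent, and the latter depend only
on the number of letters of `P` and `S`. The occurrences of lower letter below `m` are exactly those
of `t`, so the telescoping identity `1 - u ^ occ = (1 - u) * ∑ u ^ #(lower occurrences)`, summed
over all words, gives `A - E = (1 - u) * t ^ 2 * (G - 1) * R`, with `G` the series of the words `t`
(and the empty word) and `R` that of the pairs `(P, S)`.

A king word either starts with its largest letter or is counted by `G`, so `E = (1 + t) * G`.
Placing the letter `0` between `P` and `S` gives a king word unless `P` ends in `1`, and reversal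
turns these exceptions into pairs with one letter less, so `A = 1 + (t - t ^ 2) * R`. Eliminating
`G` and `R` proves the theorem.
-/

open Finset
open scoped List

section Lists

variable {α : Type*}

theorem append_cons_inj_of_nodup {a : α} {l₁ l₂ l₁' l₂' : List α} (hl : (l₁ ++ a :: l₂).Nodup)
    (h : l₁ ++ a :: l₂ = l₁' ++ a :: l₂') : l₁ = l₁' ∧ l₂ = l₂' := by
  rw [List.nodup_middle, List.nodup_cons, List.mem_append, not_or] at hl
  obtain ⟨h₁, -, h₂⟩ := (List.append_cons_inj_of_notMem hl.1.1 hl.1.2).1 h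
  exact ⟨h₁, h₂⟩

theorem append_perm_append_iff_of_separated (p : α → Prop)
    {l₁ l₂ l₁' l₂' : List α} (h₁ : ∀ x ∈ l₁, p x) (h₂ : ∀ x ∈ l₂, ¬ p x) (h₁' : ∀ x ∈ l₁', p x)
    (h₂' : ∀ x ∈ l₂', ¬ p x) : l₁ ++ l₂ ~ l₁' ++ l₂' ↔ l₁ ~ l₁' ∧ l₂ ~ l₂' := by
  classical
  refine ⟨fun h => ⟨?_, ?_⟩, fun h => h.1.append h.2⟩
  · have := h.filter p
    simpa +contextual [List.filter_append, List.filter_eq_self.2, List.filter_eq_nil_iff.2, *]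
      using this
  · have := h.filter (¬ p ·)
    simpa +contextual [List.filter_append, List.filter_eq_self.2, List.filter_eq_nil_iff.2, *]
      using this

theorem isChain_concat_iff_of_forall {r : α → α → Prop} {l : List α} {a : α}
    (h : ∀ x ∈ l, r x a) : (l ++ [a]).IsChain r ↔ l.IsChain r := by
  rw [List.isChain_append]
  simpa using fun _ x hx => h x (List.mem_of_mem_getLast? hx)

theorem isChain_cons_iff_of_forall {r : α → α → Prop} {l : List α} {a : α}
    (h : ∀ x ∈ l, r a x) : (a :: l).IsChain r ↔ l.IsChain r := by
  rw [List.isChain_cons]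
  simpa using fun _ x hx => h x (List.mem_of_mem_head? hx)

theorem exists_ofFn_eq_append_cons_append_cons_iff {n : ℕ} {f : Fin n → α} {a b : α}
    {p q r : α → Prop} :
    (∃ P t S, List.ofFn f = P ++ a :: (t ++ b :: S) ∧
        (∀ x ∈ P, p x) ∧ (∀ x ∈ t, q x) ∧ ∀ x ∈ S, r x) ↔
      ∃ i j, i < j ∧ f i = a ∧ f j = b ∧
        (∀ k < i, p (f k)) ∧ (∀ k, i < k → k < j → q (f k)) ∧ ∀ k, j < k → r (f k) := by
  constructor
  · rintro ⟨P, t, S, h, hP, ht, hS⟩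
    have hn : n = P.length + t.length + S.length + 2 := by
      simpa [add_assoc, add_left_comm, add_comm] using congrArg List.length h
    have hf : ∀ k : Fin n, f k = (P ++ a :: (t ++ b :: S))[k]'(by grind) := by
      simp [← h]
    refine ⟨⟨P.length, by lia⟩, ⟨P.length + 1 + t.length, by lia⟩, by simp; lia, by grind, by grind,
      fun k hk => hP _ (by grind), fun k hik hkj => ht _ (by grind), fun k hk => hS _ (by grind)⟩
  · rintro ⟨i, j, hij, rfl, rfl, hp, hq, hr⟩
    refine ⟨(List.ofFn f).take i, ((List.ofFn f).take j).drop (i + 1), (List.ofFn f).drop (j + 1),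
      List.ext_getElem (by simp; lia) fun _ _ _ => by grind, fun x hx => ?_, fun x hx => ?_,
      fun x hx => ?_⟩ <;> obtain ⟨k, hk, rfl⟩ := List.getElem_of_mem hx
    · simpa using hp ⟨k, by grind⟩ (by grind)
    · simpa using hq ⟨i + 1 + k, by grind⟩ (by grind) (by grind)
    · simpa using hr ⟨j + 1 + k, by grind⟩ (by grind)

end Lists

theorem one_sub_mul_sum_pow_card_filter_lt {ι R : Type*} [LinearOrder ι] [CommRing R] (u : R)
    (s : Finset ι) : (1 - u) * ∑ m ∈ s, u ^ #{x ∈ s | x < m} = 1 - u ^ #s := by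
  induction s using Finset.induction_on_max with
  | empty => simp
  | insert a s h ih =>
    have ha : a ∉ s := fun h' => lt_irrefl _ (h a h')
    have below_max : {x ∈ insert a s | x < a} = s := by grind
    have below_old : ∀ m ∈ s, {x ∈ insert a s | x < m} = {x ∈ s | x < m} := by grind
    rw [sum_insert ha, card_insert_of_notMem ha, below_max,
      sum_congr rfl fun m hm => by rw [below_old m hm], mul_add, ih]
    ring

/-! ### King words -/

/-- Two letters may be neighbours in a king permutation. -/
def Far (a b : ℕ) : Prop := a + 1 < b ∨ b + 1 < a

instance : DecidableRel Far := fun a b => inferInstanceAs (Decidable (a + 1 < b ∨ b + 1 < a))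

theorem far_comm {a b : ℕ} : Far a b ↔ Far b a := or_comm

theorem not_far_iff_of_lt {a b : ℕ} (h : b < a) : ¬ Far a b ↔ a = b + 1 := by
  unfold Far
  lia

theorem far_add_left (a b c : ℕ) : Far (a + b) (a + c) ↔ Far b c := by
  unfold Far
  lia

theorem isChain_far_reverse {l : List ℕ} : l.reverse.IsChain Far ↔ l.IsChain Far := by
  simp only [List.isChain_reverse, far_comm]

/-- The one-line words of the king permutations of `{0, …, n - 1}`. -/
def kingWords (n : ℕ) : Finset (List ℕ) :=
  {l ∈ (List.range n).permutations.toFinset | l.IsChain Far}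

/-- The king words of length `n` not starting with their largest letter `n - 1`: these, when
nonempty, are the words that fit between the two letters `n` and `n + 1` of an occurrence. -/
def innerWords (n : ℕ) : Finset (List ℕ) :=
  {l ∈ (List.range n).permutations.toFinset | (n :: l).IsChain Far}

/-- The pairs `(P, S)` that together arrange the `k` letters following `b` and can stand
before and after a block of letters at most `b` whose last letter is `b`; the junction of `P` with
the block is left unconstrained. -/
def outerPairs (b k : ℕ) : Finset (List ℕ × List ℕ) :=
  {p ∈ ((List.range' (b + 1) k).permutations.flatMap fun l => l.inits.zip l.tails).toFinset |
    p.1.IsChain Far ∧ (b :: p.2).IsChain Far}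

theorem mem_kingWords {n : ℕ} {l : List ℕ} :
    l ∈ kingWords n ↔ l ~ List.range n ∧ l.IsChain Far := by
  simp [kingWords]

theorem nodup_of_mem_kingWords {n : ℕ} {l : List ℕ} (hl : l ∈ kingWords n) : l.Nodup :=
  (mem_kingWords.1 hl).1.nodup_iff.2 List.nodup_range

theorem mem_innerWords {n : ℕ} {l : List ℕ} :
    l ∈ innerWords n ↔ l ~ List.range n ∧ (n :: l).IsChain Far := by
  simp [innerWords]

theorem mem_outerPairs {b k : ℕ} {P S : List ℕ} :
    (P, S) ∈ outerPairs b k ↔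
      P ++ S ~ List.range' (b + 1) k ∧ P.IsChain Far ∧ (b :: S).IsChain Far := by
  have mem_splits (l : List ℕ) : (P, S) ∈ l.inits.zip l.tails ↔ P ++ S = l :=
    List.mem_zip_inits_tails
  simp [outerPairs, mem_splits]

theorem lt_of_mem_innerWords {n x : ℕ} {l : List ℕ} (hl : l ∈ innerWords n) (hx : x ∈ l) :
    x < n :=
  List.mem_range.1 ((mem_innerWords.1 hl).1.mem_iff.1 hx)

theorem lt_of_mem_outerPairs {b k x : ℕ} {P S : List ℕ} (h : (P, S) ∈ outerPairs b k)
    (hx : x ∈ P ++ S) : b < x :=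
  (List.mem_range'_1.1 ((mem_outerPairs.1 h).1.mem_iff.1 hx)).1

theorem innerWords_subset_kingWords (n : ℕ) : innerWords n ⊆ kingWords n := fun _ hl =>
  have h := mem_innerWords.1 hl
  mem_kingWords.2 ⟨h.1, h.2.tail⟩

theorem cons_mem_kingWords_succ {n : ℕ} {l : List ℕ} :
    n :: l ∈ kingWords (n + 1) ↔ l ∈ innerWords n := by
  rw [mem_kingWords, mem_innerWords, List.range_succ,
    (List.perm_append_singleton n (List.range n)).congr_right, List.perm_cons]

theorem kingWords_zero : kingWords 0 = {[]} := by
  ext l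
  simp +contextual [mem_kingWords]

theorem kingWords_one : kingWords 1 = {[0]} := by
  ext l
  simp +contextual [mem_kingWords]

theorem innerWords_zero : innerWords 0 = {[]} := by
  ext l
  simp +contextual [mem_innerWords]

theorem outerPairs_zero_right (b : ℕ) : outerPairs b 0 = {([], [])} := by
  ext ⟨P, S⟩
  simp +contextual [mem_outerPairs]

theorem kingWords_succ (n : ℕ) :
    kingWords (n + 1) = innerWords (n + 1) ∪ (innerWords n).image (List.cons n) := by
  ext l
  simp only [mem_union, mem_image]
  constructor
  · intro hl
    rw [or_iff_not_imp_left, mem_innerWords]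
    intro hnot
    obtain ⟨hperm, hchain⟩ := mem_kingWords.1 hl
    rcases l with - | ⟨a, l⟩
    · simp [hperm] at hnot
    · obtain rfl : a = n := by
        have : a < n + 1 := List.mem_range.1 (hperm.mem_iff.1 List.mem_cons_self)
        simp [hperm, hchain, Far] at hnot
        lia
      exact ⟨l, cons_mem_kingWords_succ.1 hl, rfl⟩
  · rintro (hl | ⟨l, hl, rfl⟩)
    · exact innerWords_subset_kingWords _ hl
    · exact cons_mem_kingWords_succ.2 hl

theorem disjoint_innerWords_image_cons (n : ℕ) :
    Disjoint (innerWords (n + 1)) ((innerWords n).image (List.cons n)) := by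
  rw [disjoint_left]
  rintro _ hl hl'
  obtain ⟨l, -, rfl⟩ := mem_image.1 hl'
  exact (not_far_iff_of_lt n.lt_succ_self).2 rfl (mem_innerWords.1 hl).2.rel

theorem append_cons_zero_mem_kingWords_succ {k : ℕ} {P S : List ℕ} :
    P ++ 0 :: S ∈ kingWords (k + 1) ↔ (P, S) ∈ outerPairs 0 k ∧ (P ++ [0]).IsChain Far := by
  rw [mem_kingWords, mem_outerPairs, List.isChain_split, List.range_eq_range', List.range'_succ,
    List.perm_middle.congr_left, List.perm_cons]
  exact ⟨fun ⟨h, hP, hS⟩ => ⟨⟨h, hP.left_of_append, hS⟩, hP⟩, fun ⟨⟨h, _, hS⟩, hP⟩ => ⟨h, hP, hS⟩⟩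

theorem card_kingWords_succ (k : ℕ) :
    #(kingWords (k + 1)) = #{p ∈ outerPairs 0 k | (p.1 ++ [0]).IsChain Far} := by
  symm
  refine card_bij (fun p _ => p.1 ++ 0 :: p.2) ?_ ?_ ?_
  · rintro ⟨P, S⟩ h
    exact append_cons_zero_mem_kingWords_succ.2 (mem_filter.1 h)
  · rintro ⟨P, S⟩ h ⟨P', S'⟩ - heq
    have hnodup := nodup_of_mem_kingWords (append_cons_zero_mem_kingWords_succ.2 (mem_filter.1 h))
    obtain ⟨rfl, rfl⟩ := append_cons_inj_of_nodup hnodup heq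
    rfl
  · intro l hl
    have zero_mem : 0 ∈ l := (mem_kingWords.1 hl).1.mem_iff.2 (List.mem_range.2 k.succ_pos)
    obtain ⟨P, S, rfl⟩ := List.append_of_mem zero_mem
    exact ⟨(P, S), mem_filter.2 (append_cons_zero_mem_kingWords_succ.1 hl), rfl⟩

theorem outerPairs_eq_image (b k : ℕ) :
    outerPairs b k = (outerPairs 0 k).image (Prod.map (List.map (b + ·)) (List.map (b + ·))) := by
  have mem_shift (P S : List ℕ) :
      (P.map (b + ·), S.map (b + ·)) ∈ outerPairs b k ↔ (P, S) ∈ outerPairs 0 k := by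
    rw [mem_outerPairs, mem_outerPairs, ← List.map_append, ← List.map_add_range' (a := b),
      List.map_perm_map_iff (add_right_injective b),
      show b :: S.map (b + ·) = (0 :: S).map (b + ·) by simp, List.isChain_map, List.isChain_map]
    simp only [far_add_left, zero_add]
  ext ⟨P, S⟩
  constructor
  · intro h
    have mem_range_map (l : List ℕ) (hl : ∀ x ∈ l, x ∈ P ++ S) :
        ∃ l' : List ℕ, l'.map (b + ·) = l := by
      change l ∈ Set.range _
      rw [Set.range_list_map]
      exact fun x hx => ⟨x - b, Nat.add_sub_of_le (lt_of_mem_outerPairs h (hl x hx)).le⟩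
    obtain ⟨P, rfl⟩ := mem_range_map P (by grind)
    obtain ⟨S, rfl⟩ := mem_range_map S (by grind)
    exact mem_image.2 ⟨(P, S), (mem_shift P S).1 h, rfl⟩
  · rintro h
    obtain ⟨⟨P, S⟩, hmem, heq⟩ := mem_image.1 h
    obtain ⟨rfl, rfl⟩ := Prod.mk.inj heq
    exact (mem_shift P S).2 hmem

theorem card_outerPairs (b k : ℕ) : #(outerPairs b k) = #(outerPairs 0 k) := by
  have := List.map_injective_iff.2 (add_right_injective b)
  rw [outerPairs_eq_image, card_image_of_injective _ (this.prodMap this)]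

theorem reverse_concat_mem_outerPairs {b k : ℕ} {P S : List ℕ} :
    (S.reverse ++ [b + 1], P.reverse) ∈ outerPairs b (k + 1) ↔ (P, S) ∈ outerPairs (b + 1) k := by
  have hperm : S.reverse ++ [b + 1] ++ P.reverse ~ (b + 1) :: (P ++ S) := by
    rw [List.append_assoc, List.singleton_append]
    exact List.perm_middle.trans ((List.perm_append_comm.trans
      (P.reverse_perm.append S.reverse_perm)).cons _)
  have hrev : S.reverse ++ [b + 1] = ((b + 1) :: S).reverse := by simp
  rw [mem_outerPairs, mem_outerPairs, hperm.congr_left, List.range'_succ, List.perm_cons,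
    hrev, isChain_far_reverse]
  refine and_congr_right fun h => ?_
  rw [and_comm, isChain_cons_iff_of_forall, isChain_far_reverse]
  intro x hx
  have := List.mem_range'_1.1 (h.mem_iff.1 (List.mem_append_left S (List.mem_reverse.1 hx)))
  exact Or.inl (by lia)

theorem concat_isChain_iff_of_mem_outerPairs {b k : ℕ} {P S : List ℕ}
    (h : (P, S) ∈ outerPairs b k) : (P ++ [b]).IsChain Far ↔ b + 1 ∉ P.getLast? := by
  rw [List.isChain_append, and_iff_right (mem_outerPairs.1 h).2.1, and_iff_right (.singleton b)]
  have far_iff : ∀ x ∈ P.getLast?, Far x b ↔ x ≠ b + 1 := fun x hx =>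
    (not_iff_comm.1 <| not_far_iff_of_lt <|
      lt_of_mem_outerPairs h (List.mem_append_left S (List.mem_of_mem_getLast? hx))).symm
  simp only [List.head?_cons, Option.mem_some_iff, forall_eq']
  exact ⟨fun h' hb => (far_iff _ hb).1 (h' _ hb) rfl,
    fun hb x hx => (far_iff x hx).2 fun hxb => hb (hxb ▸ hx)⟩

theorem card_outerPairs_not_isChain (b k : ℕ) :
    #{p ∈ outerPairs b (k + 1) | ¬ (p.1 ++ [b]).IsChain Far} = #(outerPairs (b + 1) k) := by
  symm
  refine card_bij (fun p _ => (p.2.reverse ++ [b + 1], p.1.reverse)) ?_ ?_ ?_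
  · rintro ⟨P, S⟩ h
    have hmem := reverse_concat_mem_outerPairs.2 h
    refine mem_filter.2 ⟨hmem, ?_⟩
    rw [concat_isChain_iff_of_mem_outerPairs hmem, not_not]
    exact List.getLast?_concat
  · rintro ⟨P, S⟩ - ⟨P', S'⟩ - h
    simpa [and_comm] using h
  · rintro ⟨P, S⟩ h
    obtain ⟨hmem, hP⟩ := mem_filter.1 h
    rw [concat_isChain_iff_of_mem_outerPairs hmem, not_not] at hP
    obtain ⟨P, rfl⟩ := List.getLast?_eq_some_iff.1 hP
    refine ⟨(S.reverse, P.reverse), ?_, by simp⟩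
    rw [← reverse_concat_mem_outerPairs]
    simpa using hmem

theorem card_kingWords_add_two_add_card_outerPairs (k : ℕ) :
    #(kingWords (k + 2)) + #(outerPairs 0 k) = #(outerPairs 0 (k + 1)) := by
  rw [card_kingWords_succ, ← card_outerPairs 1 k, ← card_outerPairs_not_isChain,
    card_filter_add_card_filter_not]

/-! ### Occurrences in words -/

/-- `m` and `m + 1` are the letters `σ_i` and `σ_j` of an occurrence of the mesh pattern in the
word `l`. Every occurrence in a permutation is of this form, by `OccP.val_eq_val_add_one`. -/
def IsOccValue (l : List ℕ) (m : ℕ) : Prop :=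
  ∃ P t S, l = P ++ m :: (t ++ (m + 1) :: S) ∧
    (∀ x ∈ P, m + 1 < x) ∧ (∀ x ∈ t, x < m) ∧ ∀ x ∈ S, m + 1 < x

open Classical in
/-- The lower letters of the occurrences of the mesh pattern in the word `l`; an occurrence in a
permutation is determined by its lower letter. -/
noncomputable def occValues (l : List ℕ) : Finset ℕ := {m ∈ l.toFinset | IsOccValue l m}

theorem IsOccValue.mem {l : List ℕ} {m : ℕ} (h : IsOccValue l m) : m ∈ l := by
  obtain ⟨P, t, S, rfl, -⟩ := h
  simp

theorem IsOccValue.succ_mem {l : List ℕ} {m : ℕ} (h : IsOccValue l m) : m + 1 ∈ l := by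
  obtain ⟨P, t, S, rfl, -⟩ := h
  simp

theorem mem_occValues {l : List ℕ} {m : ℕ} : m ∈ occValues l ↔ IsOccValue l m := by
  classical
  simpa [occValues] using IsOccValue.mem

theorem isOccValue_cons_iff_of_forall_lt {n m : ℕ} {l : List ℕ} (h : ∀ x ∈ l, x < n) :
    IsOccValue (n :: l) m ↔ IsOccValue l m := by
  constructor
  · rintro ⟨_ | ⟨a, P⟩, t, S, heq, hP, ht, hS⟩ <;> obtain ⟨rfl, rfl⟩ := List.cons.inj heq
    · exact absurd (h (n + 1) (by simp)) (by lia)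
    · exact ⟨P, t, S, rfl, fun x hx => hP x (.tail _ hx), ht, hS⟩
  · intro hm
    have hn := h _ hm.succ_mem
    obtain ⟨P, t, S, rfl, hP, ht, hS⟩ := hm
    exact ⟨n :: P, t, S, rfl, List.forall_mem_cons.2 ⟨hn, hP⟩, ht, hS⟩

theorem occValues_cons_of_forall_lt {n : ℕ} {l : List ℕ} (h : ∀ x ∈ l, x < n) :
    occValues (n :: l) = occValues l := by
  ext m
  rw [mem_occValues, mem_occValues, isOccValue_cons_iff_of_forall_lt h]

theorem IsOccValue.filter_le {l : List ℕ} {m b : ℕ} (h : IsOccValue l m) (hb : m + 1 ≤ b) :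
    IsOccValue (l.filter (· ≤ b)) m := by
  obtain ⟨P, t, S, rfl, hP, ht, hS⟩ := h
  refine ⟨P.filter (· ≤ b), t.filter (· ≤ b), S.filter (· ≤ b), ?_,
    fun x hx => hP x (List.mem_of_mem_filter hx), fun x hx => ht x (List.mem_of_mem_filter hx),
    fun x hx => hS x (List.mem_of_mem_filter hx)⟩
  simp [List.filter_append, hb, (Nat.le_succ m).trans hb]

section Block

variable {m k : ℕ} {P t S : List ℕ} (hP : ∀ x ∈ P, m + 1 < x) (ht : ∀ x ∈ t, x < m)
  (hS : ∀ x ∈ S, m + 1 < x)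

include hP ht hS

theorem filter_le_append_cons_append_cons :
    (P ++ m :: (t ++ (m + 1) :: S)).filter (· ≤ m) = m :: t := by
  have hP' : P.filter (· ≤ m) = [] := by grind [List.filter_eq_nil_iff]
  have ht' : t.filter (· ≤ m) = t := by grind [List.filter_eq_self]
  have hS' : S.filter (· ≤ m) = [] := by grind [List.filter_eq_nil_iff]
  simp [List.filter_append, hP', ht', hS']

theorem isOccValue_append_cons_append_cons_iff {m' : ℕ} (hm' : m' < m) :
    IsOccValue (P ++ m :: (t ++ (m + 1) :: S)) m' ↔ IsOccValue t m' := by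
  constructor
  · intro h
    rw [← isOccValue_cons_iff_of_forall_lt ht, ← filter_le_append_cons_append_cons hP ht hS]
    exact h.filter_le hm'
  · intro h
    have hlt := ht _ h.succ_mem
    obtain ⟨P', t', S', rfl, hP', ht', hS'⟩ := h
    refine ⟨P ++ m :: P', t', S' ++ (m + 1) :: S, by simp, ?_, ht', ?_⟩ <;> grind

theorem filter_lt_occValues_append_cons_append_cons :
    {x ∈ occValues (P ++ m :: (t ++ (m + 1) :: S)) | x < m} = occValues t := by
  ext x
  rw [mem_filter, mem_occValues, mem_occValues]
  constructor
  · rintro ⟨hx, hlt⟩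
    exact (isOccValue_append_cons_append_cons_iff hP ht hS hlt).1 hx
  · intro hx
    have hlt := ht x hx.mem
    exact ⟨(isOccValue_append_cons_append_cons_iff hP ht hS hlt).2 hx, hlt⟩

theorem append_cons_append_cons_perm_range_iff :
    P ++ m :: (t ++ (m + 1) :: S) ~ List.range (m + k + 2) ↔
      t ~ List.range m ∧ P ++ S ~ List.range' (m + 2) k := by
  have letters_perm : P ++ m :: (t ++ (m + 1) :: S) ~ m :: (m + 1) :: (t ++ (P ++ S)) :=
    List.perm_middle.trans <| .cons m <| by
      rw [← List.append_assoc]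
      exact List.perm_middle.trans <| .cons (m + 1) <| by
        rw [← List.append_assoc]
        exact List.perm_append_comm.append_right S
  have range_perm : List.range (m + k + 2) ~
      m :: (m + 1) :: (List.range m ++ List.range' (m + 2) k) := by
    rw [add_assoc, List.range_eq_range', List.range_eq_range', ← List.range'_append_1, zero_add,
      List.range'_succ, List.range'_succ]
    exact List.perm_middle.trans (List.perm_middle.cons m)
  rw [letters_perm.congr_left, range_perm.congr_right, List.perm_cons, List.perm_cons]
  refine append_perm_append_iff_of_separated (· < m) ht ?_ ?_ ?_
  · grind
  · simp
  · grind

omit hS in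
theorem append_cons_append_cons_isChain_iff :
    (P ++ m :: (t ++ (m + 1) :: S)).IsChain Far ↔
      ((m :: t).IsChain Far ∧ t ≠ []) ∧ P.IsChain Far ∧ ((m + 1) :: S).IsChain Far := by
  have concat_iff : (m :: t ++ [m + 1]).IsChain Far ↔ (m :: t).IsChain Far ∧ t ≠ [] := by
    rcases t.eq_nil_or_concat' with rfl | ⟨t, a, rfl⟩
    · exact iff_of_false (fun h => (not_far_iff_of_lt m.lt_succ_self).2 rfl (far_comm.1 h.rel))
        fun h => h.2 rfl
    · have last_far : Far a (m + 1) := Or.inl (Nat.succ_lt_succ (ht a (by simp)))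
      have last_eq : (m :: (t ++ [a])).getLast? = some a := List.getLast?_concat (l := m :: t)
      rw [List.isChain_append]
      simp [last_eq, last_far]
  rw [List.isChain_split, ← List.cons_append, List.isChain_split (l₁ := m :: t), concat_iff,
    isChain_concat_iff_of_forall (r := Far) fun x hx => Or.inr (hP x hx), and_left_comm]

theorem append_cons_append_cons_mem_kingWords_iff :
    P ++ m :: (t ++ (m + 1) :: S) ∈ kingWords (m + k + 2) ↔
      (t ≠ [] ∧ t ∈ innerWords m) ∧ (P, S) ∈ outerPairs (m + 1) k := by
  rw [mem_kingWords, mem_innerWords, mem_outerPairs,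
    append_cons_append_cons_perm_range_iff hP ht hS,
    append_cons_append_cons_isChain_iff hP ht]
  tauto

end Block

theorem sum_kingWords_filter_mem_occValues {R : Type*} [CommRing R] (u : R) (m k : ℕ) :
    ∑ l ∈ kingWords (m + k + 2) with m ∈ occValues l, u ^ #{x ∈ occValues l | x < m} =
      (∑ t ∈ (innerWords m).erase [], u ^ #(occValues t)) * #(outerPairs 0 k) := by
  have sum_product_eq : (∑ t ∈ (innerWords m).erase [], u ^ #(occValues t)) * #(outerPairs 0 k) =
      ∑ p ∈ (innerWords m).erase [] ×ˢ outerPairs (m + 1) k, u ^ #(occValues p.1) := by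
    simp [sum_product, ← card_outerPairs (m + 1) k, mul_sum, mul_comm]
  have bounds {t P S : List ℕ} (h : (t, P, S) ∈ (innerWords m).erase [] ×ˢ outerPairs (m + 1) k) :
      (∀ x ∈ P, m + 1 < x) ∧ (∀ x ∈ t, x < m) ∧ ∀ x ∈ S, m + 1 < x := by
    obtain ⟨ht, hPS⟩ := mem_product.1 h
    exact ⟨fun x hx => lt_of_mem_outerPairs hPS (List.mem_append_left S hx),
      fun x hx => lt_of_mem_innerWords (mem_of_mem_erase ht) hx,
      fun x hx => lt_of_mem_outerPairs hPS (List.mem_append_right P hx)⟩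
  have block_mem {t P S : List ℕ} (hP : ∀ x ∈ P, m + 1 < x) (ht : ∀ x ∈ t, x < m)
      (hS : ∀ x ∈ S, m + 1 < x) : P ++ m :: (t ++ (m + 1) :: S) ∈ kingWords (m + k + 2) ↔
        (t, P, S) ∈ (innerWords m).erase [] ×ˢ outerPairs (m + 1) k := by
    rw [append_cons_append_cons_mem_kingWords_iff hP ht hS, mem_product, mem_erase]
  rw [sum_product_eq]
  symm
  refine sum_bij (fun p _ => p.2.1 ++ m :: (p.1 ++ (m + 1) :: p.2.2)) ?_ ?_ ?_ ?_
  · rintro ⟨t, P, S⟩ h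
    obtain ⟨hP, ht, hS⟩ := bounds h
    exact mem_filter.2 ⟨(block_mem hP ht hS).2 h, mem_occValues.2 ⟨P, t, S, rfl, hP, ht, hS⟩⟩
  · rintro ⟨t, P, S⟩ h ⟨t', P', S'⟩ - heq
    obtain ⟨hP, ht, hS⟩ := bounds h
    have hnodup := nodup_of_mem_kingWords ((block_mem hP ht hS).2 h)
    obtain ⟨rfl, htail⟩ := append_cons_inj_of_nodup hnodup heq
    obtain ⟨rfl, rfl⟩ := append_cons_inj_of_nodup hnodup.of_append_right.of_cons htail
    rfl
  · intro l hl
    obtain ⟨hl, hm⟩ := mem_filter.1 hl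
    obtain ⟨P, t, S, rfl, hP, ht, hS⟩ := mem_occValues.1 hm
    exact ⟨(t, P, S), (block_mem hP ht hS).1 hl, rfl⟩
  · rintro ⟨t, P, S⟩ h
    obtain ⟨hP, ht, hS⟩ := bounds h
    rw [filter_lt_occValues_append_cons_append_cons hP ht hS]

theorem IsOccValue.succ_lt {n m : ℕ} {l : List ℕ} (hl : l ∈ kingWords n) (hm : IsOccValue l m) :
    m + 1 < n :=
  List.mem_range.1 ((mem_kingWords.1 hl).1.mem_iff.1 hm.succ_mem)

theorem sum_kingWords_one_sub_pow_card_occValues {R : Type*} [CommRing R] (u : R) (n : ℕ) :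
    ∑ l ∈ kingWords (n + 2), (1 - u ^ #(occValues l)) = (1 - u) * ∑ p ∈ antidiagonal n,
      (∑ t ∈ (innerWords p.1).erase [], u ^ #(occValues t)) * #(outerPairs 0 p.2) := by
  have mem_comm (l : List ℕ) (m : ℕ) : l ∈ kingWords (n + 2) ∧ m ∈ occValues l ↔
      l ∈ {l ∈ kingWords (n + 2) | m ∈ occValues l} ∧ m ∈ range (n + 1) := by
    rw [mem_filter, mem_range, iff_self_and, mem_occValues]
    exact fun ⟨hl, hm⟩ => Nat.lt_of_succ_lt_succ (hm.succ_lt hl)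
  simp only [← one_sub_mul_sum_pow_card_filter_lt u, ← mul_sum]
  rw [sum_comm' mem_comm, Nat.sum_antidiagonal_eq_sum_range_succ_mk]
  congr 1
  refine sum_congr rfl fun m hm => ?_
  have add_sub : m + (n - m) = n := Nat.add_sub_of_le (mem_range_succ_iff.1 hm)
  rw [← sum_kingWords_filter_mem_occValues, add_sub]

/-! ### From permutations to words -/

section Permutations

variable {n : ℕ}

/-- The one-line word `σ 0, σ 1, …, σ (n - 1)` of a permutation of `Fin n`. -/
def permWord (σ : Equiv.Perm (Fin n)) : List ℕ := List.ofFn fun i => (σ i : ℕ)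

theorem permWord_injective : Function.Injective (permWord (n := n)) := fun _ _ h =>
  Equiv.ext fun i => Fin.ext (congrFun (List.ofFn_injective h) i)

theorem permWord_perm_range (σ : Equiv.Perm (Fin n)) : permWord σ ~ List.range n := by
  have h := Equiv.Perm.ofFn_comp_perm σ fun i => (i : ℕ)
  rwa [List.ofFn_eq_map (f := fun i => (i : ℕ)), List.map_coe_finRange_eq_range] at h

theorem image_permWord_univ :
    univ.image (permWord (n := n)) = (List.range n).permutations.toFinset := by
  refine eq_of_subset_of_card_le (fun l hl => ?_) ?_
  · obtain ⟨σ, -, rfl⟩ := mem_image.1 hl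
    simpa using permWord_perm_range σ
  · rw [card_image_of_injective _ permWord_injective, card_univ, Fintype.card_perm,
      Fintype.card_fin, List.toFinset_card_of_nodup (List.nodup_permutations _ List.nodup_range),
      List.length_permutations, List.length_range]

theorem isChain_permWord_iff {σ : Equiv.Perm (Fin n)} :
    (permWord σ).IsChain Far ↔ IsKing σ := by
  have far_iff (a b : ℕ) : Far a b ↔ 1 < |(b : ℤ) - a| := by
    rw [lt_abs, Far]
    lia
  simp only [permWord, List.isChain_ofFn, far_iff]
  exact ⟨fun h i hi => h i hi, fun h i hi => h ⟨i, by lia⟩ hi⟩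

open Classical in
theorem image_permWord_isKing :
    ({σ | IsKing σ} : Finset (Equiv.Perm (Fin n))).image permWord = kingWords n := by
  rw [kingWords, ← image_permWord_univ, filter_image]
  simp [isChain_permWord_iff]

theorem OccP.val_eq_val_add_one {σ : Equiv.Perm (Fin n)} {i j : Fin n} (h : OccP σ i j) :
    (σ j : ℕ) = σ i + 1 := by
  obtain ⟨-, hσ, hleft, hmid, hright⟩ := h
  have hlt : (σ i : ℕ) < σ j := hσ
  -- The letter `σ i + 1` cannot lie strictly below `σ j`: no position is open to it.
  by_contra hne
  obtain ⟨k, hk⟩ := σ.surjective ⟨σ i + 1, by lia⟩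
  have hk_val : (σ k : ℕ) = σ i + 1 := congrArg Fin.val hk
  rcases lt_trichotomy k i with hki | rfl | hik
  · exact absurd (hleft k hki) (by lia)
  · lia
  rcases lt_trichotomy k j with hkj | rfl | hjk
  · exact absurd (hmid k hik hkj) (by lia)
  · exact hne hk_val
  · exact absurd (hright k hjk) (by lia)

theorem isOccValue_permWord_iff {σ : Equiv.Perm (Fin n)} {m : ℕ} :
    IsOccValue (permWord σ) m ↔ ∃ i j, OccP σ i j ∧ (σ i : ℕ) = m := by
  unfold IsOccValue permWord
  rw [exists_ofFn_eq_append_cons_append_cons_iff]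
  refine exists_congr fun i => exists_congr fun j => ⟨?_, ?_⟩
  · rintro ⟨hij, rfl, hj, hleft, hmid, hright⟩
    rw [← hj] at hleft hright
    exact ⟨⟨hij, Fin.lt_def.2 (by lia), hleft, hmid, hright⟩, rfl⟩
  · rintro ⟨h, rfl⟩
    rw [← h.val_eq_val_add_one]
    obtain ⟨hij, -, hleft, hmid, hright⟩ := h
    exact ⟨hij, rfl, rfl, hleft, hmid, hright⟩

theorem occP_eq_card_occValues (σ : Equiv.Perm (Fin n)) : occP σ = #(occValues (permWord σ)) := by
  rw [occP, ← Nat.card_eq_finsetCard]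
  refine Nat.card_eq_of_bijective
    (fun p => ⟨σ p.1.1, mem_occValues.2 (isOccValue_permWord_iff.2 ⟨_, _, p.2, rfl⟩)⟩) ⟨?_, ?_⟩
  · rintro ⟨⟨i, j⟩, h⟩ ⟨⟨i', j'⟩, h'⟩ heq
    have hi : (σ i : ℕ) = σ i' := congrArg Subtype.val heq
    have hj : (σ j : ℕ) = σ j' := by rw [h.val_eq_val_add_one, h'.val_eq_val_add_one, hi]
    obtain rfl := σ.injective (Fin.ext hi)
    obtain rfl := σ.injective (Fin.ext hj)
    rfl
  · rintro ⟨m, hm⟩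
    obtain ⟨i, j, h, rfl⟩ := isOccValue_permWord_iff.1 (mem_occValues.1 hm)
    exact ⟨⟨(i, j), h⟩, rfl⟩

end Permutations

/-! ### Generating functions -/

section GeneratingFunctions

open PowerSeries

variable {R : Type*} [CommRing R]

open Classical in
/-- The generating function of king permutations by length (marked by `X`) and by occurrences of
the mesh pattern (marked by `u`): `E(t, u)` for an indeterminate `u`, and `A(t)` for `u = 1`. -/
noncomputable def kingSeries (u : R) : R⟦X⟧ :=
  .mk fun n => ∑ σ : Equiv.Perm (Fin n) with IsKing σ, u ^ occP σ

/-- The part of `kingSeries u` from the permutations counted by `innerWords`. -/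
noncomputable def innerSeries (u : R) : R⟦X⟧ :=
  .mk fun n => ∑ l ∈ innerWords n, u ^ #(occValues l)

variable (R) in
/-- The generating function counting the surroundings of an occurrence by their number of
letters. -/
noncomputable def outerSeries : R⟦X⟧ := .mk fun k => (#(outerPairs 0 k) : R)

theorem coeff_kingSeries (u : R) (n : ℕ) :
    coeff n (kingSeries u) = ∑ l ∈ kingWords n, u ^ #(occValues l) := by
  classical
  rw [kingSeries, coeff_mk, ← image_permWord_isKing,
    sum_image permWord_injective.injOn]
  simp only [occP_eq_card_occValues]

theorem coeff_kingSeries_one (n : ℕ) : coeff n (kingSeries (1 : R)) = #(kingWords n) := by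
  simp [coeff_kingSeries]

theorem coeff_innerSeries (u : R) (n : ℕ) :
    coeff n (innerSeries u) = ∑ l ∈ innerWords n, u ^ #(occValues l) :=
  coeff_mk _ _

theorem coeff_innerSeries_sub_one (u : R) (n : ℕ) :
    coeff n (innerSeries u - 1) = ∑ l ∈ (innerWords n).erase [], u ^ #(occValues l) := by
  rw [map_sub, coeff_innerSeries, coeff_one, sub_eq_iff_eq_add]
  split_ifs with hn
  · subst hn
    simp [innerWords_zero, occValues]
  · have nil_notMem : [] ∉ innerWords n := by simp [mem_innerWords, hn]
    rw [erase_eq_of_notMem nil_notMem, add_zero]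

theorem kingSeries_eq_one_add_X_mul_innerSeries (u : R) :
    kingSeries u = (1 + X) * innerSeries u := by
  ext (_ | n)
  · rw [add_mul, one_mul, map_add, coeff_zero_X_mul, add_zero, coeff_kingSeries, coeff_innerSeries,
      kingWords_zero, innerWords_zero]
  · have sum_image_cons : ∑ l ∈ (innerWords n).image (List.cons n), u ^ #(occValues l) =
        ∑ l ∈ innerWords n, u ^ #(occValues l) := by
      rw [sum_image (List.cons_injective).injOn]
      refine sum_congr rfl fun l hl => ?_
      rw [occValues_cons_of_forall_lt fun x hx => lt_of_mem_innerWords hl hx]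
    rw [coeff_kingSeries, kingWords_succ, sum_union (disjoint_innerWords_image_cons n),
      sum_image_cons, add_mul, one_mul, map_add, coeff_succ_X_mul, coeff_innerSeries,
      coeff_innerSeries]

theorem kingSeries_one_eq_one_add_mul_outerSeries :
    kingSeries (1 : R) = 1 + (X - X ^ 2) * outerSeries R := by
  have factor : (X - X ^ 2) * outerSeries R = X * (outerSeries R - X * outerSeries R) := by ring
  ext n
  rw [factor, coeff_kingSeries_one]
  match n with
  | 0 => simp [kingWords_zero]
  | 1 => simp [kingWords_one, outerSeries, outerPairs_zero_right, coeff_one, coeff_succ_X_mul]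
  | k + 2 =>
    rw [map_add, coeff_succ_X_mul, map_sub, coeff_succ_X_mul, outerSeries, coeff_mk, coeff_mk,
      ← card_kingWords_add_two_add_card_outerPairs]
    simp [coeff_one]

theorem kingSeries_one_sub_kingSeries (u : R) :
    kingSeries 1 - kingSeries u =
      (1 - C u) * (X ^ 2 * ((innerSeries u - 1) * outerSeries R)) := by
  have one_sub_C : (1 - C u : R⟦X⟧) = C (1 - u) := by rw [map_sub, map_one]
  ext n
  rw [map_sub, coeff_kingSeries_one, coeff_kingSeries, card_eq_sum_ones, Nat.cast_sum,
    Nat.cast_one, ← sum_sub_distrib, one_sub_C, coeff_C_mul]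
  by_cases hn : n < 2
  · have occValues_eq_empty : ∀ l ∈ kingWords n, occValues l = ∅ := fun l hl =>
      eq_empty_of_forall_notMem fun m hm => by
        have := (mem_occValues.1 hm).succ_lt hl
        lia
    rw [coeff_X_pow_mul', if_neg (by lia), mul_zero]
    exact sum_eq_zero fun l hl => by simp [occValues_eq_empty l hl]
  · obtain ⟨n, rfl⟩ := Nat.exists_eq_add_of_le' (not_lt.1 hn)
    rw [coeff_X_pow_mul, sum_kingWords_one_sub_pow_card_occValues, coeff_mul]
    simp only [coeff_innerSeries_sub_one, outerSeries, coeff_mk]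

theorem statement_17_general (u : R) :
    (1 - X * (1 - C u) - X ^ 2 + X * (1 - C u) * kingSeries 1) * kingSeries u =
      (1 + X) * ((1 - C u * X) * kingSeries 1 - X * (1 - C u)) := by
  linear_combination -(1 - X ^ 2) * kingSeries_one_sub_kingSeries u +
    (1 - C u) * X * ((kingSeries u - 1 - X) * kingSeries_one_eq_one_add_mul_outerSeries (R := R) +
      (1 - X) * X * outerSeries R * kingSeries_eq_one_add_X_mul_innerSeries u)

theorem kingAu_eq_kingSeries_one : kingAu = kingSeries 1 := by
  classical
  ext1 n
  simp [kingAu, kingSeries, kingCount, Fintype.card_subtype]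

theorem Etu_eq_kingSeries_X : Etu = kingSeries Polynomial.X := by
  ext1 n
  simp only [Etu, kingSeries, coeff_mk, sum_filter]

end GeneratingFunctions

theorem statement_17 :
    (1 - T * (1 - U) - T ^ 2 + T * (1 - U) * kingAu) * Etu
      = (1 + T) * ((1 - U * T) * kingAu - T * (1 - U)) := by
  rw [kingAu_eq_kingSeries_one, Etu_eq_kingSeries_X]
  exact statement_17_general Polynomial.X
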